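/- If ℓ(C) ≤ 2, then the minimal number of generators of the S-module D₀(f) (the smallest cardinality of a generating set) is exactly m + 2 − ℓ(C); that is, C is an s-syzygy curve with s = m + 2 − ℓ(C). -/

import Mathlib

open MvPolynomial

noncomputable abbrev S : Type := MvPolynomial (Fin 3) ℂ

/-- The gradient `∇g = (g_x, g_y, g_z)` of a polynomial `g ∈ S = ℂ[x,y,z]`. -/
noncomputable def grad (g : S) : Fin 3 → S := fun t => pderiv t g

/-- The syzygy triple `ρ_j = Σ_{i≠j} (∏_{k≠i,j} f_k) (∇f_i × ∇f_j)`
of the 2-form `ω_j = df ∧ df_j/f_j`. -/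
noncomputable def rho {m : ℕ} (F : Fin m → S) (j : Fin m) : Fin 3 → S :=
  ∑ i ∈ Finset.univ.erase j,
    (∏ k ∈ (Finset.univ.erase j).erase i, F k) • crossProduct (grad (F i)) (grad (F j))

/-- The Jacobian syzygy module `D₀(f) = {(a,b,c) ∈ S³ : a f_x + b f_y + c f_z = 0}`. -/
noncomputable def D0 (f : S) : Submodule S (Fin 3 → S) where
  carrier := {v | ∑ t, v t * pderiv t f = 0}
  add_mem' {a b} ha hb := by
    simp only [Set.mem_setOf_eq, Pi.add_apply, add_mul, Finset.sum_add_distrib] at *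
    rw [ha, hb, add_zero]
  zero_mem' := by simp
  smul_mem' c v hv := by
    simp only [Set.mem_setOf_eq, Pi.smul_apply, smul_eq_mul, mul_assoc, ← Finset.mul_sum] at *
    rw [hv, mul_zero]

/-- The syzygy triple `σ^x = (0, f_z, −f_y)` of the 2-form `df ∧ dx`. -/
noncomputable def sigx (f : S) : Fin 3 → S := ![0, pderiv 2 f, -pderiv 1 f]
/-- The syzygy triple `σ^y = (−f_z, 0, f_x)` of the 2-form `df ∧ dy`. -/
noncomputable def sigy (f : S) : Fin 3 → S := ![-pderiv 2 f, 0, pderiv 0 f]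
/-- The syzygy triple `σ^z = (f_y, −f_x, 0)` of the 2-form `df ∧ dz`. -/
noncomputable def sigz (f : S) : Fin 3 → S := ![pderiv 1 f, -pderiv 0 f, 0]

/-!
By Euler's relation a syzygy `v` of the partial derivatives of `f = ∏ F j` is recovered, up to the
factor `deg f`, from the 1-form `v × (x, y, z)`, and this form divided by `f` has at most
logarithmic poles along the curve. Since the components are smooth and cross normally, every such
form is `a + ∑ j, b j • dF j / F j` with polynomial coefficients: this is clear locally away from
the origin, and it extends over the origin because the quotients involved have positive depth.
Wedging with `df`, the three Koszul syzygies `df ∧ dx`, `df ∧ dy`, `df ∧ dz` and the `m` syzygies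
`ρ j = df ∧ dF j / F j` generate `D₀(f)`, and all their relations come from `∑ j, ρ j = 0` and
`F j • ρ j = df ∧ dF j`. The minimal number of generators is read off modulo the irrelevant ideal:
the first relation saves one generator, and the second ones save as many as the linear parts of
the `F j` are independent, which is `min ℓ 3` because no three components meet.
-/

namespace NormalCrossing

open Matrix

section LinearAlgebra

variable {K V : Type*} [Field K] [AddCommGroup V] [Module K V]

lemma exists_finset_card_add_finrank_eq [FiniteDimensional K V] (W : Submodule K V) :
    ∃ T : Finset V, T.card + Module.finrank K W = Module.finrank K V ∧
      Submodule.span K (T : Set V) ⊔ W = ⊤ := by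
  classical
  obtain ⟨U, hU⟩ := W.exists_isCompl
  refine ⟨Finset.univ.image (Subtype.val ∘ Module.finBasis K U), ?_, ?_⟩
  · rw [Finset.card_image_of_injective _
      (Subtype.val_injective.comp (Module.finBasis K U).injective), Finset.card_univ,
      Fintype.card_fin, add_comm, Submodule.finrank_add_eq_of_isCompl hU]
  · rw [Finset.coe_image, Finset.coe_univ, Set.image_univ, ← U.coe_subtype, Set.range_comp,
      Submodule.span_image, (Module.finBasis K U).span_eq, Submodule.map_top,
      Submodule.range_subtype, sup_comm, hU.sup_eq_top]

lemma finrank_le_card_add_finrank_map_ker [FiniteDimensional K V] {R M N : Type*} [Ring R]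
    [AddCommGroup M] [Module R M] [AddCommGroup N] [Module R N] {ε : R →+* K}
    [RingHomSurjective ε] (φ : N →ₗ[R] M) (ev : N →ₛₗ[ε] V) (hev : Function.Surjective ev)
    (T : Finset M) (hT : Submodule.span R (T : Set M) = φ.range) :
    Module.finrank K V ≤ T.card + Module.finrank K (φ.ker.map ev) := by
  classical
  have hlift : ∀ t ∈ T, ∃ n, φ n = t := fun t ht =>
    LinearMap.mem_range.1 (hT ▸ Submodule.subset_span ht)
  choose! g hg using hlift
  have hgT : φ '' (g '' T) = T := by
    rw [Set.image_image, Set.image_congr hg, Set.image_id']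
  have hsup : Submodule.span R (g '' T) ⊔ φ.ker = ⊤ := by
    rw [← Submodule.comap_map_eq, Submodule.map_span, hgT, hT, LinearMap.range_eq_map,
      Submodule.comap_map_eq, top_sup_eq]
  have hmap := congrArg (Submodule.map ev) hsup
  rw [Submodule.map_sup, Submodule.map_span, Submodule.map_top, LinearMap.range_eq_top.2 hev,
    Set.image_image, ← Finset.coe_image] at hmap
  calc Module.finrank K V
      = Module.finrank K ↥(Submodule.span K (T.image (fun t => ev (g t)) : Set V) ⊔
          φ.ker.map ev) := by rw [hmap, finrank_top]
    _ ≤ Module.finrank K (Submodule.span K (T.image (fun t => ev (g t)) : Set V)) +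
          Module.finrank K (φ.ker.map ev) := Submodule.finrank_add_le_finrank_add_finrank _ _
    _ ≤ T.card + Module.finrank K (φ.ker.map ev) :=
        Nat.add_le_add_right ((finrank_span_finset_le_card _).trans Finset.card_image_le) _

lemma finrank_prod_le {W : Type*} [AddCommGroup W] [Module K W] [FiniteDimensional K V]
    [FiniteDimensional K W] (A : Submodule K V) (B : Submodule K W) :
    Module.finrank K (A.prod B) ≤ Module.finrank K A + Module.finrank K B := by
  rw [← Module.finrank_prod]
  have h := LinearMap.finrank_range_le (A.subtype.prodMap B.subtype)
  rwa [LinearMap.range_prodMap, A.range_subtype, B.range_subtype] at h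

lemma span_image_erase_of_sum_eq_zero {R M ι : Type*} [Ring R] [AddCommGroup M]
    [Module R M] [Fintype ι] [DecidableEq ι] {v : ι → M} (hv : ∑ i, v i = 0) (j : ι) :
    Submodule.span R (v '' (Finset.univ.erase j : Finset ι)) = Submodule.span R (Set.range v) := by
  refine le_antisymm (Submodule.span_mono (Set.image_subset_range _ _)) (Submodule.span_le.2 ?_)
  rintro _ ⟨i, rfl⟩
  have hmem : ∀ i ∈ Finset.univ.erase j,
      v i ∈ Submodule.span R (v '' (Finset.univ.erase j : Finset ι)) :=
    fun i hi => Submodule.subset_span (Set.mem_image_of_mem v hi)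
  by_cases hij : i = j
  · rw [← Finset.add_sum_erase _ _ (Finset.mem_univ j)] at hv
    rw [hij, eq_neg_of_add_eq_zero_left hv]
    exact neg_mem (sum_mem hmem)
  · exact hmem i (by simp [hij])

end LinearAlgebra

section Saturation

variable {σ K N : Type*}

/-- A submodule saturated with respect to the irrelevant ideal `(X i)`, that is, one whose
quotient has depth at least one along that ideal. -/
def IsSaturated [CommRing K] [AddCommGroup N] [Module (MvPolynomial σ K) N]
    (P : Submodule (MvPolynomial σ K) N) : Prop :=
  ∀ w, (∀ i, (X i : MvPolynomial σ K) • w ∈ P) → w ∈ P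

lemma IsSaturated.pi [CommRing K] {ι : Type*} {P : ι → Ideal (MvPolynomial σ K)}
    (hP : ∀ k, IsSaturated (P k)) : IsSaturated (Submodule.pi Set.univ P) :=
  fun w hw k _ => hP k (w k) fun i => hw i k trivial

lemma X_dvd_of_X_mul_eq_X_mul [CommRing K] [IsDomain K] {i j : σ} (hij : i ≠ j)
    {a b : MvPolynomial σ K} (h : X i * a = X j * b) : X j ∣ a :=
  (X_prime.dvd_or_dvd (Dvd.intro b h.symm)).resolve_left fun hji => hij (X_dvd_X.1 hji).symm

lemma isSaturated_span_singleton [CommRing K] [IsDomain K] [Nontrivial σ] (g : MvPolynomial σ K) :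
    IsSaturated (Ideal.span {g}) := by
  intro h hh
  simp only [smul_eq_mul, Ideal.mem_span_singleton] at hh ⊢
  obtain ⟨i, j, hij⟩ := exists_pair_ne σ
  obtain ⟨u, hu⟩ := hh i
  obtain ⟨v, hv⟩ := hh j
  obtain rfl | hg := eq_or_ne g 0
  · simpa using hu
  have huv : X j * u = X i * v := mul_left_cancel₀ hg (by linear_combination X i * hv - X j * hu)
  obtain ⟨t, rfl⟩ := X_dvd_of_X_mul_eq_X_mul hij.symm huv
  exact ⟨t, mul_left_cancel₀ (X_ne_zero i) (by linear_combination hu)⟩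

/-- By the Nullstellensatz a power of the irrelevant ideal multiplies `w` into `P`, and saturation
removes that power. -/
lemma IsSaturated.mem_of_locally_mem [Field K] [IsAlgClosed K] [Finite σ] [AddCommGroup N]
    [Module (MvPolynomial σ K) N] {P : Submodule (MvPolynomial σ K) N} (hP : IsSaturated P) {w : N}
    (hw : ∀ p : σ → K, p ≠ 0 → ∃ g : MvPolynomial σ K, g • w ∈ P ∧ eval p g ≠ 0) : w ∈ P := by
  let I : Ideal (MvPolynomial σ K) := Ideal.span (Set.range X)
  have hI : I ≤ (P.colon {w}).radical := by
    rw [← vanishingIdeal_zeroLocus_eq_radical (K := K), Ideal.span_le]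
    rintro _ ⟨i, rfl⟩ p hp
    obtain rfl : p = 0 := by
      by_contra hp0
      obtain ⟨g, hg, hgp⟩ := hw p hp0
      exact hgp (by simpa [aeval_eq_eval] using hp g (Submodule.mem_colon_singleton.2 hg))
    simp
  obtain ⟨n, hn⟩ := Ideal.exists_pow_le_of_le_radical_of_fg hI (IsNoetherian.noetherian _)
  have descend : ∀ n w, I ^ n ≤ P.colon {w} → w ∈ P := by
    intro n
    induction n with
    | zero => exact fun w hw => by simpa using hw (x := 1) (by simp)
    | succ n ih =>
      refine fun w hw => hP w fun i => ih _ fun g hg => ?_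
      rw [Submodule.mem_colon_singleton, smul_smul, ← Submodule.mem_colon_singleton]
      exact hw (Ideal.mul_mem_mul hg (Ideal.subset_span ⟨i, rfl⟩))
  exact descend n w hn

lemma isUnit_of_eval_ne_zero [Field K] [IsAlgClosed K] [Finite σ] [Nontrivial σ]
    {g : MvPolynomial σ K} (hg : ∀ p : σ → K, p ≠ 0 → eval p g ≠ 0) : IsUnit g := by
  rw [isUnit_iff_dvd_one, ← Ideal.mem_span_singleton]
  exact (isSaturated_span_singleton g).mem_of_locally_mem fun p hp => ⟨g, by simp, hg p hp⟩

end Saturation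

section Koszul

variable {K : Type*} [CommRing K] [IsDomain K]

lemma mem_span_X_image_of_X_mul_mem {σ R : Type*} [CommRing R] {s : Set σ} {k : σ}
    (hk : k ∉ s) {h : MvPolynomial σ R} (hh : X k * h ∈ Ideal.span (X '' s : Set _)) :
    h ∈ Ideal.span (X '' s : Set _) := by
  rw [mem_ideal_span_X_image] at hh ⊢
  intro m hm
  obtain ⟨i, hi, him⟩ := hh (Finsupp.single k 1 + m)
    (by simpa only [MvPolynomial.mem_support_iff, coeff_X_mul] using hm)
  refine ⟨i, hi, ?_⟩
  have hki : k ≠ i := fun h => hk (h ▸ hi)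
  simpa [Finsupp.single_apply, hki] using him

lemma exists_cross_X_of_X_dotProduct_eq_zero {r : Fin 3 → MvPolynomial (Fin 3) K}
    (hr : X ⬝ᵥ r = 0) : ∃ s, r = s ⨯₃ X := by
  rw [vec3_dotProduct] at hr
  have hr2 : r 2 ∈ Ideal.span (X '' {0, 1} : Set (MvPolynomial (Fin 3) K)) := by
    refine mem_span_X_image_of_X_mul_mem (k := 2) (by decide) ?_
    rw [Set.image_pair, Ideal.mem_span_pair]
    exact ⟨-r 0, -r 1, by linear_combination -hr⟩
  rw [Set.image_pair, Ideal.mem_span_pair] at hr2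
  obtain ⟨p, q, hpq⟩ := hr2
  have h01 : X 1 * (r 1 + q * X 2) = X 0 * (-(r 0 + p * X 2)) := by
    linear_combination hr + X 2 * hpq
  obtain ⟨t, ht⟩ := X_dvd_of_X_mul_eq_X_mul (by decide) h01
  have hr0 : r 0 + p * X 2 = -X 1 * t :=
    mul_left_cancel₀ (X_ne_zero 0) (by linear_combination h01 - X 1 * ht)
  refine ⟨![q, -p, t], ?_⟩
  ext1 k
  fin_cases k <;> simp only [cross_apply, cons_val, Fin.zero_eta, Fin.mk_one, Fin.reduceFinMk]
  · linear_combination hr0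
  · linear_combination ht
  · linear_combination -hpq

lemma exists_eq_smul_X_of_cross_X_eq_zero {u : Fin 3 → MvPolynomial (Fin 3) K}
    (hu : u ⨯₃ X = 0) : ∃ t : MvPolynomial (Fin 3) K, u = t • X := by
  have h1 := congrFun hu 1
  have h2 := congrFun hu 2
  simp only [cross_apply, cons_val, Pi.zero_apply] at h1 h2
  obtain ⟨t, ht⟩ := X_dvd_of_X_mul_eq_X_mul (i := 1) (j := 0) (by decide) (a := u 0) (b := u 1)
    (by linear_combination h2)
  refine ⟨t, funext fun k => mul_left_cancel₀ (X_ne_zero 0) ?_⟩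
  fin_cases k <;> simp only [Pi.smul_apply, smul_eq_mul, Fin.zero_eta, Fin.mk_one, Fin.reduceFinMk]
  · linear_combination X 0 * ht
  · linear_combination X 1 * ht - h2
  · linear_combination X 2 * ht + h1

/-- The first Koszul cohomology of `X` on the quotient by `g` vanishes, since that quotient has
depth two. -/
lemma exists_dvd_sub_mul_X {g : MvPolynomial (Fin 3) K} (hg : g ≠ 0)
    {b : Fin 3 → MvPolynomial (Fin 3) K} (hb : ∀ i, g ∣ (b ⨯₃ X) i) :
    ∃ t, ∀ i, g ∣ b i - t * X i := by
  choose r hr using hb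
  replace hr : b ⨯₃ X = g • r := funext hr
  have hXr : X ⬝ᵥ r = 0 := by
    refine (smul_eq_zero.1 ?_).resolve_left hg
    rw [← dotProduct_smul, ← hr, dot_cross_self]
  obtain ⟨s, rfl⟩ := exists_cross_X_of_X_dotProduct_eq_zero hXr
  obtain ⟨t, ht⟩ := exists_eq_smul_X_of_cross_X_eq_zero (u := b - g • s)
    (by rw [map_sub, LinearMap.sub_apply, hr, map_smul, LinearMap.smul_apply, sub_self])
  refine ⟨t, fun i => ⟨s i, ?_⟩⟩
  have hti := congrFun ht i
  simp only [Pi.sub_apply, Pi.smul_apply, smul_eq_mul] at hti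
  linear_combination hti

lemma IsSaturated.sup_span_singleton {N : Type*} [AddCommGroup N]
    [Module (MvPolynomial (Fin 3) K) N] {P : Submodule (MvPolynomial (Fin 3) K) N}
    (hP : IsSaturated P) {g : MvPolynomial (Fin 3) K}
    (hg : g ≠ 0) {w₀ : N} (hcolon : P.colon {w₀} = Ideal.span {g}) :
    IsSaturated (P ⊔ Submodule.span _ {w₀}) := by
  have hdvd : ∀ r, g ∣ r ↔ r • w₀ ∈ P := fun r => by
    rw [← Submodule.mem_colon_singleton, hcolon, Ideal.mem_span_singleton]
  intro w hw
  have hb : ∀ i, ∃ b : MvPolynomial (Fin 3) K, (X i : MvPolynomial (Fin 3) K) • w - b • w₀ ∈ P := by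
    intro i
    obtain ⟨q, hq, c, hc, hqc⟩ := Submodule.mem_sup.1 (hw i)
    obtain ⟨b, rfl⟩ := Submodule.mem_span_singleton.1 hc
    exact ⟨b, by rwa [← hqc, add_sub_cancel_right]⟩
  choose b hb using hb
  have hcross : ∀ i j, g ∣ b i * X j - b j * X i := by
    intro i j
    rw [hdvd]
    convert sub_mem (P.smul_mem (X i) (hb j)) (P.smul_mem (X j) (hb i)) using 1
    module
  obtain ⟨t, ht⟩ := exists_dvd_sub_mul_X hg (b := b) (by
    intro k
    fin_cases k <;> simp [cross_apply, hcross])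
  have hwt : w - t • w₀ ∈ P := hP _ fun i => by
    convert add_mem (hb i) ((hdvd _).1 (ht i)) using 1
    module
  rw [Submodule.mem_sup]
  exact ⟨_, hwt, _, Submodule.mem_span_singleton.2 ⟨t, rfl⟩, sub_add_cancel _ _⟩

end Koszul

section Gradient

variable {R : Type*} [CommRing R] {σ : Type*}

/-- The gradient of a polynomial, as a vector of polynomials. -/
noncomputable def gradVec (g : MvPolynomial σ R) : σ → MvPolynomial σ R := fun t => pderiv t g

/-- The gradient of a polynomial at a point; at the origin it is the vector of coefficients of the
linear part. -/
noncomputable def gradAt (g : MvPolynomial σ R) (p : σ → R) : σ → R := fun t => eval p (pderiv t g)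

lemma gradVec_mul (g h : MvPolynomial σ R) :
    gradVec (g * h) = g • gradVec h + h • gradVec g :=
  funext fun t => (pderiv t).leibniz g h

lemma gradAt_mul (g h : MvPolynomial σ R) (p : σ → R) :
    gradAt (g * h) p = eval p g • gradAt h p + eval p h • gradAt g p := by
  funext t
  simp [gradAt, Derivation.leibniz]

lemma map_cross {A B : Type*} [CommRing A] [CommRing B] (φ : A →+* B) (u v : Fin 3 → A)
    (i : Fin 3) : φ ((u ⨯₃ v) i) = ((φ ∘ u) ⨯₃ (φ ∘ v)) i := by
  fin_cases i <;> simp [cross_apply]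

lemma dvd_cross {A : Type*} [CommRing A] {g : A} {v : Fin 3 → A} (hv : ∀ i, g ∣ v i)
    (u : Fin 3 → A) (i : Fin 3) : g ∣ (u ⨯₃ v) i := by
  choose r hr using hv
  obtain rfl : v = g • r := funext hr
  exact ⟨(u ⨯₃ r) i, by simp⟩

end Gradient

section Smooth

variable {K : Type*} [Field K] {g : MvPolynomial (Fin 3) K}

lemma isSaturated_span_pair {a b : MvPolynomial (Fin 3) K} (hb : b ≠ 0) (hab : IsRelPrime a b) :
    IsSaturated (Ideal.span {a, b}) := by
  rw [Ideal.span_insert, sup_comm]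
  refine (isSaturated_span_singleton b).sup_span_singleton hb (Ideal.ext fun r => ?_)
  rw [Submodule.mem_colon_singleton, smul_eq_mul, Ideal.mem_span_singleton,
    Ideal.mem_span_singleton]
  exact ⟨hab.symm.dvd_of_dvd_mul_right, fun h => h.mul_right a⟩

lemma ne_zero_of_gradAt (hg : ∀ p, gradAt g p = 0 → p = 0) : g ≠ 0 := by
  rintro rfl
  exact one_ne_zero (hg 1 (funext fun t => by simp [gradAt]))

/-- Where both curves meet, `w` is `b • dg` and also a multiple of `dg'`, so `b • dg ∧ dg' = 0`; the
witness `u` is a component of `dg ∧ dg'`. -/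
lemma exists_mul_mem_span_pair {g g' b : MvPolynomial (Fin 3) K}
    {w : Fin 3 → MvPolynomial (Fin 3) K} {p : Fin 3 → K}
    (hp : LinearIndependent K ![gradAt g p, gradAt g' p])
    (hg : ∀ k, g ∣ w k - b * pderiv k g) (hg' : ∀ i, g' ∣ (w ⨯₃ gradVec g') i) :
    ∃ u, u * b ∈ Ideal.span {g, g'} ∧ eval p u ≠ 0 := by
  obtain ⟨i, hi⟩ := Function.ne_iff.1 (crossProduct_ne_zero_iff_linearIndependent.2 hp)
  refine ⟨(gradVec g ⨯₃ gradVec g') i, ?_, by rwa [map_cross]⟩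
  obtain ⟨c, hc⟩ := hg' i
  obtain ⟨d, hd⟩ : g ∣ ((w - b • gradVec g) ⨯₃ gradVec g') i := by
    rw [← cross_anticomm, Pi.neg_apply, dvd_neg]
    exact dvd_cross hg _ i
  rw [map_sub, map_smul, LinearMap.sub_apply, LinearMap.smul_apply, Pi.sub_apply, Pi.smul_apply,
    smul_eq_mul, hc] at hd
  exact Ideal.mem_span_pair.2 ⟨-d, c, by linear_combination hd⟩

variable [IsAlgClosed K]

lemma isRelPrime_of_linearIndependent_gradAt {a b : MvPolynomial (Fin 3) K}
    (hab : ∀ p ≠ 0, eval p a = 0 → eval p b = 0 →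
      LinearIndependent K ![gradAt a p, gradAt b p]) : IsRelPrime a b := by
  rintro c ⟨a', rfl⟩ ⟨b', rfl⟩
  refine isUnit_of_eval_ne_zero fun p hp hc => ?_
  refine crossProduct_ne_zero_iff_linearIndependent.2
    (hab p hp (by simp [hc]) (by simp [hc])) ?_
  simp [gradAt_mul, hc]

lemma dvd_of_dvd_mul_pderiv (hg : ∀ p, gradAt g p = 0 → p = 0) {h : MvPolynomial (Fin 3) K}
    (hh : ∀ k, g ∣ h * pderiv k g) : g ∣ h := by
  rw [← Ideal.mem_span_singleton]
  refine (isSaturated_span_singleton g).mem_of_locally_mem fun p hp => ?_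
  obtain ⟨k, hk⟩ := Function.ne_iff.1 (mt (hg p) hp)
  refine ⟨pderiv k g, ?_, hk⟩
  rw [smul_eq_mul, mul_comm, Ideal.mem_span_singleton]
  exact hh k

lemma exists_dvd_sub_mul_pderiv (hg : ∀ p, gradAt g p = 0 → p = 0)
    {w : Fin 3 → MvPolynomial (Fin 3) K} (hw : ∀ i, g ∣ (w ⨯₃ gradVec g) i) :
    ∃ t, ∀ k, g ∣ w k - t * pderiv k g := by
  let P : Submodule (MvPolynomial (Fin 3) K) (Fin 3 → MvPolynomial (Fin 3) K) :=
    Submodule.pi Set.univ fun _ => Ideal.span {g}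
  have hP : ∀ v, v ∈ P ↔ ∀ k, g ∣ v k := fun v => by
    simp [P, Submodule.mem_pi, Ideal.mem_span_singleton]
  have hsat : IsSaturated (P ⊔ Submodule.span _ {gradVec g}) := by
    refine IsSaturated.sup_span_singleton (.pi fun _ => isSaturated_span_singleton g)
      (ne_zero_of_gradAt hg) (Ideal.ext fun r => ?_)
    rw [Submodule.mem_colon_singleton, hP, Ideal.mem_span_singleton]
    exact ⟨dvd_of_dvd_mul_pderiv hg, fun h k => h.mul_right _⟩
  have hmem : w ∈ P ⊔ Submodule.span _ {gradVec g} := by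
    refine hsat.mem_of_locally_mem fun p hp => ?_
    obtain ⟨i, hi⟩ := Function.ne_iff.1 (mt (hg p) hp)
    refine ⟨pderiv i g, Submodule.mem_sup.2 ⟨pderiv i g • w - w i • gradVec g, ?_,
      w i • gradVec g, Submodule.smul_mem _ _ (Submodule.mem_span_singleton_self _),
      sub_add_cancel _ _⟩, hi⟩
    rw [hP]
    intro k
    convert dvd_cross hw (Pi.single i 1) k using 1
    rw [cross_cross_eq_smul_sub_smul', single_one_dotProduct, dotProduct_single_one]
    rfl
  obtain ⟨q, hq, c, hc, rfl⟩ := Submodule.mem_sup.1 hmem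
  obtain ⟨t, rfl⟩ := Submodule.mem_span_singleton.1 hc
  exact ⟨t, fun k => by simpa [gradVec] using (hP q).1 hq k⟩

end Smooth

section Cofactor

variable {ι R : Type*} [Fintype ι] [DecidableEq ι] [CommRing R]

/-- The product of all members of a family but one, the coefficient with which the derivative of
that member enters the derivative of the whole product. -/
def cofactor (F : ι → R) (j : ι) : R := ∏ k ∈ Finset.univ.erase j, F k

lemma mul_cofactor (F : ι → R) (j : ι) : F j * cofactor F j = ∏ i, F i :=
  Finset.mul_prod_erase _ _ (Finset.mem_univ j)

lemma dvd_cofactor (F : ι → R) {i j : ι} (hij : i ≠ j) : F i ∣ cofactor F j :=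
  Finset.dvd_prod_of_mem _ (by simp [hij])

lemma dvd_sum_cofactor_mul_sub (F x : ι → R) (j : ι) :
    F j ∣ ∑ i, cofactor F i * x i - cofactor F j * x j := by
  rw [← Finset.add_sum_erase _ _ (Finset.mem_univ j), add_sub_cancel_left]
  exact Finset.dvd_sum fun i hi =>
    (dvd_cofactor F (Finset.ne_of_mem_erase hi).symm).mul_right _

lemma isRelPrime_cofactor [DecompositionMonoid R] {F : ι → R}
    (hF : Pairwise fun i j => IsRelPrime (F i) (F j)) (j : ι) : IsRelPrime (F j) (cofactor F j) :=
  IsRelPrime.prod_right fun _ hi => hF (Finset.ne_of_mem_erase hi).symm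

lemma dvd_of_dvd_sum_cofactor_mul [DecompositionMonoid R] {F x : ι → R}
    (hF : Pairwise fun i j => IsRelPrime (F i) (F j)) {j : ι}
    (hx : F j ∣ ∑ i, cofactor F i * x i) : F j ∣ x j :=
  (isRelPrime_cofactor hF j).dvd_of_dvd_mul_left
    ((dvd_sub_right hx).1 (dvd_sum_cofactor_mul_sub F x j))

lemma gradVec_prod {σ : Type*} (F : ι → MvPolynomial σ R) :
    gradVec (∏ i, F i) = ∑ j, cofactor F j • gradVec (F j) := by
  have hprod : ∀ s : Finset ι, gradVec (∏ i ∈ s, F i) =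
      ∑ j ∈ s, (∏ k ∈ s.erase j, F k) • gradVec (F j) := by
    intro s
    induction s using Finset.induction_on with
    | empty => exact funext fun t => by simp [gradVec]
    | insert a s ha ih =>
      rw [Finset.prod_insert ha, gradVec_mul, ih, Finset.sum_insert ha, Finset.erase_insert ha,
        Finset.smul_sum, add_comm]
      congr 1
      refine Finset.sum_congr rfl fun j hj => ?_
      have haj : a ≠ j := fun h => ha (h ▸ hj)
      rw [Finset.erase_insert_of_ne haj, Finset.prod_insert (by simp [ha]), mul_smul]
  exact hprod Finset.univ

end Cofactor

section LogForms

variable {ι K : Type*} [Field K]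

/-- The components `F j = 0`, of degrees `e j`, of a plane curve with normal crossings all of whose
components are smooth. -/
structure IsNormalCrossing (F : ι → MvPolynomial (Fin 3) K) (e : ι → ℕ) : Prop where
  isHomogeneous : ∀ j, (F j).IsHomogeneous (e j)
  smooth : ∀ j p, gradAt (F j) p = 0 → p = 0
  transversal : ∀ i j, i ≠ j → ∀ p ≠ 0, eval p (F i) = 0 → eval p (F j) = 0 →
    LinearIndependent K ![gradAt (F i) p, gradAt (F j) p]
  no_triple_point : ∀ i j k, i ≠ j → i ≠ k → j ≠ k → ∀ p ≠ 0,
    ¬(eval p (F i) = 0 ∧ eval p (F j) = 0 ∧ eval p (F k) = 0)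

/-- `w`, read as the 1-form `w / ∏ F j`, has at most logarithmic poles along each `F j = 0`. -/
def IsLogarithmic (F : ι → MvPolynomial (Fin 3) K) (w : Fin 3 → MvPolynomial (Fin 3) K) : Prop :=
  ∀ j i, F j ∣ (w ⨯₃ gradVec (F j)) i

variable {F : ι → MvPolynomial (Fin 3) K} {e : ι → ℕ}

lemma IsNormalCrossing.ne_zero (h : IsNormalCrossing F e) (j : ι) : F j ≠ 0 :=
  ne_zero_of_gradAt (h.smooth j)

lemma IsNormalCrossing.prod_ne_zero [Fintype ι] (h : IsNormalCrossing F e) : ∏ j, F j ≠ 0 :=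
  Finset.prod_ne_zero_iff.2 fun j _ => h.ne_zero j

lemma IsNormalCrossing.pairwise_isRelPrime [IsAlgClosed K] (h : IsNormalCrossing F e) :
    Pairwise fun i j => IsRelPrime (F i) (F j) :=
  fun i j hij => isRelPrime_of_linearIndependent_gradAt (h.transversal i j hij)

variable [Fintype ι] [DecidableEq ι]

/-- The numerator of the 1-form `a + ∑ j, b j • dF j / F j` over the denominator `∏ F j`. -/
noncomputable def logForm (F : ι → MvPolynomial (Fin 3) K) :
    (Fin 3 → MvPolynomial (Fin 3) K) × (ι → MvPolynomial (Fin 3) K) →ₗ[MvPolynomial (Fin 3) K]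
      (Fin 3 → MvPolynomial (Fin 3) K) :=
  LinearMap.coprod ((∏ j, F j) • LinearMap.id)
    (Fintype.linearCombination _ fun j => cofactor F j • gradVec (F j))

lemma logForm_apply (F : ι → MvPolynomial (Fin 3) K)
    (a : Fin 3 → MvPolynomial (Fin 3) K) (b : ι → MvPolynomial (Fin 3) K) (k : Fin 3) :
    logForm F (a, b) k = (∏ j, F j) * a k + ∑ j, cofactor F j * (b j * pderiv k (F j)) := by
  simp [logForm, Fintype.linearCombination_apply, gradVec, mul_left_comm]

variable [IsAlgClosed K]

lemma IsNormalCrossing.residue_mem (h : IsNormalCrossing F e) {j : ι}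
    {w : Fin 3 → MvPolynomial (Fin 3) K} {b : MvPolynomial (Fin 3) K} (hw : IsLogarithmic F w)
    (hb : ∀ k, F j ∣ w k - b * pderiv k (F j)) : b ∈ Ideal.span {F j, cofactor F j} := by
  have hF : F j ∈ Ideal.span {F j, cofactor F j} := Ideal.subset_span (Set.mem_insert _ _)
  have hcof : cofactor F j ∈ Ideal.span {F j, cofactor F j} := Ideal.subset_span (by simp)
  have hcof0 : cofactor F j ≠ 0 := Finset.prod_ne_zero_iff.2 fun k _ => h.ne_zero k
  refine (isSaturated_span_pair hcof0
    (isRelPrime_cofactor h.pairwise_isRelPrime j)).mem_of_locally_mem fun p hp => ?_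
  by_cases hjp : eval p (F j) = 0
  swap
  · exact ⟨F j, Ideal.mul_mem_right _ _ hF, hjp⟩
  by_cases hk : ∃ k, k ≠ j ∧ eval p (F k) = 0
  swap
  · push Not at hk
    refine ⟨cofactor F j, Ideal.mul_mem_right _ _ hcof, ?_⟩
    rw [cofactor, map_prod]
    exact Finset.prod_ne_zero_iff.2 fun k hkj => hk k (Finset.ne_of_mem_erase hkj)
  obtain ⟨k, hkj, hkp⟩ := hk
  obtain ⟨u, hu, hup⟩ :=
    exists_mul_mem_span_pair (h.transversal j k hkj.symm p hp hjp hkp) hb (hw k)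
  let G := ∏ l ∈ (Finset.univ.erase j).erase k, F l
  have hG : F k * G = cofactor F j := Finset.mul_prod_erase _ _ (by simp [hkj])
  have hGp : eval p G ≠ 0 := by
    rw [map_prod]
    refine Finset.prod_ne_zero_iff.2 fun l hl hlp => ?_
    rw [Finset.mem_erase, Finset.mem_erase] at hl
    exact h.no_triple_point j k l hkj.symm hl.2.1.symm hl.1.symm p hp ⟨hjp, hkp, hlp⟩
  refine ⟨G * u, ?_, by simpa using ⟨hGp, hup⟩⟩
  obtain ⟨c, d, hcd⟩ := Ideal.mem_span_pair.1 hu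
  exact Ideal.mem_span_pair.2 ⟨G * c, d, by
    rw [smul_eq_mul]; linear_combination G * hcd - d * hG⟩

lemma IsNormalCrossing.mem_range_logForm (h : IsNormalCrossing F e)
    {w : Fin 3 → MvPolynomial (Fin 3) K} (hw : IsLogarithmic F w) : w ∈ (logForm F).range := by
  choose t ht using fun j => exists_dvd_sub_mul_pderiv (h.smooth j) (hw j)
  choose c b hcb using fun j => Ideal.mem_span_pair.1 (h.residue_mem hw (ht j))
  have hdvd : ∀ k, ∏ j, F j ∣ w k - ∑ j, cofactor F j * (b j * pderiv k (F j)) := by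
    refine fun k => Fintype.prod_dvd_of_isRelPrime h.pairwise_isRelPrime fun j => ?_
    have hmod := dvd_add (ht j k) (Dvd.intro_left (c j * pderiv k (F j)) rfl)
    convert hmod.sub (dvd_sum_cofactor_mul_sub F (fun i => b i * pderiv k (F i)) j) using 1
    linear_combination -pderiv k (F j) * hcb j
  choose a ha using hdvd
  exact ⟨(a, b), funext fun k => by rw [logForm_apply, ← ha k, sub_add_cancel]⟩

end LogForms

section Presentation

variable {ι K : Type*} [Fintype ι] [Field K]

lemma dotProduct_gradVec_of_isHomogeneous {g : MvPolynomial (Fin 3) K} {n : ℕ}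
    (hg : g.IsHomogeneous n) : X ⬝ᵥ gradVec g = (n : K) • g := by
  rw [Nat.cast_smul_eq_nsmul]
  exact hg.sum_X_mul_pderiv

lemma IsNormalCrossing.dotProduct_gradVec_prod {F : ι → MvPolynomial (Fin 3) K} {e : ι → ℕ}
    (h : IsNormalCrossing F e) :
    X ⬝ᵥ gradVec (∏ j, F j) = ((∑ j, e j : ℕ) : K) • ∏ j, F j :=
  dotProduct_gradVec_of_isHomogeneous (.prod _ _ _ fun j _ => h.isHomogeneous j)

/-- The syzygies `v` of the partial derivatives of `f`, encoded as vectors orthogonal to the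
gradient. -/
def jacobianSyzygies (f : MvPolynomial (Fin 3) K) :
    Submodule (MvPolynomial (Fin 3) K) (Fin 3 → MvPolynomial (Fin 3) K) where
  carrier := {v | v ⬝ᵥ gradVec f = 0}
  add_mem' {u v} hu hv := (add_dotProduct u v _).trans (by rw [hu, hv, add_zero])
  zero_mem' := zero_dotProduct _
  smul_mem' c v hv := (smul_dotProduct c v _).trans (by rw [hv, smul_zero])

lemma mem_jacobianSyzygies {f : MvPolynomial (Fin 3) K} {v : Fin 3 → MvPolynomial (Fin 3) K} :
    v ∈ jacobianSyzygies f ↔ v ⬝ᵥ gradVec f = 0 := Iff.rfl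

lemma IsNormalCrossing.isLogarithmic_cross_X [IsAlgClosed K]
    {F : ι → MvPolynomial (Fin 3) K} {e : ι → ℕ} (h : IsNormalCrossing F e)
    {v : Fin 3 → MvPolynomial (Fin 3) K} (hv : v ∈ jacobianSyzygies (∏ j, F j)) :
    IsLogarithmic F (v ⨯₃ X) := by
  classical
  intro j i
  have hvj : F j ∣ v ⬝ᵥ gradVec (F j) := by
    refine dvd_of_dvd_sum_cofactor_mul (x := fun i => v ⬝ᵥ gradVec (F i)) h.pairwise_isRelPrime ?_
    rw [mem_jacobianSyzygies, gradVec_prod, dotProduct_sum] at hv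
    simp only [dotProduct_smul, smul_eq_mul] at hv
    exact hv ▸ dvd_zero _
  rw [cross_cross_eq_smul_sub_smul, dotProduct_gradVec_of_isHomogeneous (h.isHomogeneous j)]
  exact dvd_sub (hvj.mul_right _) ((dvd_smul_of_dvd _ dvd_rfl).mul_right _)

variable [DecidableEq ι]

/-- The syzygy of `f = ∏ F i` given by the 2-form `df ∧ dF j / F j`. -/
noncomputable def rhoSyzygy (F : ι → MvPolynomial (Fin 3) K) (j : ι) :
    Fin 3 → MvPolynomial (Fin 3) K :=
  gradVec (cofactor F j) ⨯₃ gradVec (F j)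

/-- The combinations of the Koszul syzygies and of the syzygies `rhoSyzygy F j`: up to the
denominator `∏ F j`, this is `df ∧ logForm F`. -/
noncomputable def presentation (F : ι → MvPolynomial (Fin 3) K) :
    (Fin 3 → MvPolynomial (Fin 3) K) × (ι → MvPolynomial (Fin 3) K) →ₗ[MvPolynomial (Fin 3) K]
      (Fin 3 → MvPolynomial (Fin 3) K) :=
  LinearMap.coprod (crossProduct (gradVec (∏ j, F j)))
    (Fintype.linearCombination _ (rhoSyzygy F))

lemma smul_rhoSyzygy (F : ι → MvPolynomial (Fin 3) K) (j : ι) :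
    F j • rhoSyzygy F j = gradVec (∏ i, F i) ⨯₃ gradVec (F j) := by
  rw [← mul_cofactor F j, gradVec_mul, map_add, LinearMap.add_apply, map_smul, map_smul,
    LinearMap.smul_apply, LinearMap.smul_apply, cross_self, smul_zero, add_zero, rhoSyzygy]

lemma prod_smul_presentation (F : ι → MvPolynomial (Fin 3) K)
    (x : (Fin 3 → MvPolynomial (Fin 3) K) × (ι → MvPolynomial (Fin 3) K)) :
    (∏ j, F j) • presentation F x = gradVec (∏ j, F j) ⨯₃ logForm F x := by
  simp only [presentation, logForm, LinearMap.coprod_apply, Fintype.linearCombination_apply,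
    LinearMap.smul_apply, LinearMap.id_apply, map_add, map_smul, map_sum, smul_add,
    Finset.smul_sum, ← smul_rhoSyzygy]
  refine congrArg _ (Finset.sum_congr rfl fun j _ => ?_)
  rw [smul_comm, ← mul_cofactor F j, mul_comm, mul_smul]

variable {F : ι → MvPolynomial (Fin 3) K} {e : ι → ℕ}

lemma logForm_zero_one (F : ι → MvPolynomial (Fin 3) K) :
    logForm F (0, 1) = gradVec (∏ j, F j) := by
  simp [logForm, Fintype.linearCombination_apply, gradVec_prod]

lemma sum_rhoSyzygy_eq_zero (hF : ∏ j, F j ≠ 0) : ∑ j, rhoSyzygy F j = 0 := by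
  have h := prod_smul_presentation F (0, 1)
  rw [logForm_zero_one, cross_self, smul_eq_zero_iff_right hF] at h
  simpa [presentation, Fintype.linearCombination_apply] using h

lemma presentation_mem_jacobianSyzygies (hF : ∏ j, F j ≠ 0)
    (x : (Fin 3 → MvPolynomial (Fin 3) K) × (ι → MvPolynomial (Fin 3) K)) :
    presentation F x ∈ jacobianSyzygies (∏ j, F j) := by
  rw [mem_jacobianSyzygies, ← smul_eq_zero_iff_right hF, ← smul_dotProduct,
    prod_smul_presentation, dotProduct_comm, dot_self_cross]

theorem IsNormalCrossing.range_presentation [IsAlgClosed K] (h : IsNormalCrossing F e)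
    (hd : ((∑ j, e j : ℕ) : K) ≠ 0) :
    (presentation F).range = jacobianSyzygies (∏ j, F j) := by
  refine le_antisymm ?_ fun v hv => ?_
  · rintro _ ⟨x, rfl⟩
    exact presentation_mem_jacobianSyzygies h.prod_ne_zero x
  · obtain ⟨x, hx⟩ := h.mem_range_logForm (h.isLogarithmic_cross_X hv)
    have hxv : presentation F x = ((∑ j, e j : ℕ) : K) • v := by
      refine smul_right_injective _ h.prod_ne_zero (?_ : (∏ j, F j) • _ = (∏ j, F j) • _)
      rw [prod_smul_presentation, hx, cross_cross_eq_smul_sub_smul', mem_jacobianSyzygies.1 hv,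
        zero_smul, sub_zero, dotProduct_comm, h.dotProduct_gradVec_prod, smul_assoc, smul_comm]
    exact ⟨((∑ j, e j : ℕ) : K)⁻¹ • x, by
      rw [LinearMap.map_smul_of_tower, hxv, inv_smul_smul₀ hd]⟩

lemma IsNormalCrossing.exists_of_logForm_eq_zero [IsAlgClosed K] (h : IsNormalCrossing F e)
    {a : Fin 3 → MvPolynomial (Fin 3) K} {b : ι → MvPolynomial (Fin 3) K}
    (hab : logForm F (a, b) = 0) :
    ∃ g : ι → MvPolynomial (Fin 3) K, b = F * g ∧ a = -∑ j, g j • gradVec (F j) := by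
  have hb : ∀ j, F j ∣ b j := by
    refine fun j => dvd_of_dvd_mul_pderiv (h.smooth j) fun k => ?_
    refine dvd_of_dvd_sum_cofactor_mul (x := fun j => b j * pderiv k (F j))
      h.pairwise_isRelPrime ?_
    have habk := congrFun hab k
    rw [logForm_apply, Pi.zero_apply, add_comm] at habk
    rw [eq_neg_of_add_eq_zero_left habk, dvd_neg]
    exact (Finset.dvd_prod_of_mem F (Finset.mem_univ j)).mul_right _
  choose g hg using hb
  refine ⟨g, funext hg, eq_neg_of_add_eq_zero_left
    ((smul_eq_zero_iff_right h.prod_ne_zero).1 ?_)⟩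
  rw [← hab]
  simp only [logForm, LinearMap.coprod_apply, Fintype.linearCombination_apply,
    LinearMap.smul_apply, LinearMap.id_apply, smul_add, Finset.smul_sum]
  refine congrArg _ (Finset.sum_congr rfl fun j _ => ?_)
  rw [hg j, ← mul_cofactor F j, smul_smul, smul_smul]
  congr 1
  ring

lemma IsNormalCrossing.prod_dvd_dotProduct_logForm (h : IsNormalCrossing F e)
    (x : (Fin 3 → MvPolynomial (Fin 3) K) × (ι → MvPolynomial (Fin 3) K)) :
    ∏ j, F j ∣ X ⬝ᵥ logForm F x := by
  simp only [logForm, LinearMap.coprod_apply, Fintype.linearCombination_apply,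
    LinearMap.smul_apply, LinearMap.id_apply, dotProduct_add, dotProduct_smul, dotProduct_sum,
    dotProduct_gradVec_of_isHomogeneous (h.isHomogeneous _)]
  refine dvd_add (dvd_mul_right _ _) (Finset.dvd_sum fun j _ => ?_)
  rw [smul_comm (cofactor F j), smul_eq_mul (cofactor F j), mul_comm (cofactor F j), mul_cofactor]
  exact dvd_mul_of_dvd_right (dvd_smul_of_dvd _ dvd_rfl) _

/-- Contracting `df ∧ logForm F (a, b) = 0` with `X` makes the form a multiple of `df / f`, by
Euler's relation. -/
lemma IsNormalCrossing.exists_of_presentation_eq_zero [IsAlgClosed K] (h : IsNormalCrossing F e)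
    (hd : ((∑ j, e j : ℕ) : K) ≠ 0) {a : Fin 3 → MvPolynomial (Fin 3) K}
    {b : ι → MvPolynomial (Fin 3) K} (hab : presentation F (a, b) = 0) :
    ∃ (c : MvPolynomial (Fin 3) K) (g : ι → MvPolynomial (Fin 3) K),
      b = c • 1 + F * g ∧ a = -∑ j, g j • gradVec (F j) := by
  obtain ⟨c, hc⟩ := h.prod_dvd_dotProduct_logForm (a, b)
  have hE := h.dotProduct_gradVec_prod
  generalize ((∑ j, e j : ℕ) : K) = d at hd hE
  have hcross : gradVec (∏ j, F j) ⨯₃ logForm F (a, b) = 0 := by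
    rw [← prod_smul_presentation, hab, smul_zero]
  have hform : d • logForm F (a, b) = c • gradVec (∏ j, F j) := by
    refine smul_right_injective _ h.prod_ne_zero (?_ : (∏ j, F j) • _ = (∏ j, F j) • _)
    have hX := cross_cross_eq_smul_sub_smul' X (gradVec (∏ j, F j)) (logForm F (a, b))
    rw [hcross, map_zero, hc, dotProduct_comm, hE] at hX
    rw [smul_comm, ← smul_assoc, smul_smul]
    exact (sub_eq_zero.1 hX.symm).symm
  have hker : logForm F (d • a - c • 0, d • b - c • 1) = 0 := by
    rw [← Prod.mk_sub_mk, ← Prod.smul_mk, ← Prod.smul_mk, map_sub, LinearMap.map_smul_of_tower,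
      map_smul, logForm_zero_one, hform, sub_self]
  obtain ⟨g, hb, ha⟩ := h.exists_of_logForm_eq_zero hker
  rw [sub_eq_iff_eq_add', ← eq_inv_smul_iff₀ hd] at hb
  rw [smul_zero, sub_zero, ← eq_inv_smul_iff₀ hd] at ha
  refine ⟨d⁻¹ • c, d⁻¹ • g, ?_, ?_⟩
  · rw [hb, smul_add, smul_assoc, mul_smul_comm]
  · simp only [ha, smul_neg, Finset.smul_sum, Pi.smul_apply, smul_assoc]

end Presentation

section Bounds

variable {ι K : Type*} [Field K]

lemma constantCoeff_eq_zero_of_isHomogeneous {σ : Type*} {g : MvPolynomial σ K} {n : ℕ}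
    (hg : g.IsHomogeneous n) (hn : n ≠ 0) : constantCoeff g = 0 := by
  rw [constantCoeff_eq]
  exact hg.coeff_eq_zero (by simpa using hn.symm)

lemma gradAt_zero_eq_zero {σ : Type*} {g : MvPolynomial σ K} {n : ℕ} (hg : g.IsHomogeneous n)
    (hn : n ≠ 1) : gradAt g 0 = 0 := by
  funext t
  rw [gradAt, eval_zero, constantCoeff_eq, coeff_pderiv, hg.coeff_eq_zero (by simpa using hn.symm)]
  simp

lemma gradVec_eq_C_comp_gradAt {σ : Type*} {g : MvPolynomial σ K} (hg : g.IsHomogeneous 1)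
    (p : σ → K) : gradVec g = C ∘ gradAt g p := by
  funext t
  have h := hg.pderiv (i := t)
  rw [Nat.sub_self, ← totalDegree_zero_iff_isHomogeneous, totalDegree_eq_zero_iff_eq_C] at h
  rw [gradVec, Function.comp_apply, gradAt, h, eval_C]

/-- The dimension of the space of linear forms spanned by the linear parts of the `F j`. -/
noncomputable def linearRank (F : ι → MvPolynomial (Fin 3) K) : ℕ :=
  Module.finrank K (Submodule.span K (Set.range fun j => gradAt (F j) 0))

instance ringHomSurjective_eval (σ : Type*) (p : σ → K) : RingHomSurjective (eval p) :=
  ⟨fun c => ⟨C c, eval_C c⟩⟩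

/-- Reduction of the source of `presentation` modulo the irrelevant ideal. -/
noncomputable def evalZero (ι K : Type*) [Field K] :
    (Fin 3 → MvPolynomial (Fin 3) K) × (ι → MvPolynomial (Fin 3) K)
      →ₛₗ[(eval 0 : MvPolynomial (Fin 3) K →+* K)] (Fin 3 → K) × (ι → K) where
  toFun x := (eval 0 ∘ x.1, eval 0 ∘ x.2)
  map_add' x y := by ext <;> simp
  map_smul' c x := by ext <;> simp

lemma evalZero_surjective : Function.Surjective (evalZero ι K) := fun y =>
  ⟨(C ∘ y.1, C ∘ y.2), by ext <;> simp [evalZero]⟩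

variable {F : ι → MvPolynomial (Fin 3) K} {e : ι → ℕ}

lemma IsNormalCrossing.degree_ne_zero (h : IsNormalCrossing F e) (j : ι) : e j ≠ 0 := by
  intro hj
  have hc := (totalDegree_zero_iff_isHomogeneous _).2 (hj ▸ h.isHomogeneous j)
  rw [totalDegree_eq_zero_iff_eq_C] at hc
  refine one_ne_zero (h.smooth j 1 (funext fun t => ?_))
  rw [gradAt, hc, pderiv_C, map_zero, Pi.zero_apply]

variable [Fintype ι]

lemma IsNormalCrossing.map_evalZero_ker_le [DecidableEq ι] [IsAlgClosed K]
    (h : IsNormalCrossing F e) (hd : ((∑ j, e j : ℕ) : K) ≠ 0) :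
    (presentation F).ker.map (evalZero ι K) ≤
      (Submodule.span K (Set.range fun j => gradAt (F j) 0)).prod (Submodule.span K {1}) := by
  rintro _ ⟨⟨a, b⟩, hab, rfl⟩
  obtain ⟨c, g, rfl, rfl⟩ := h.exists_of_presentation_eq_zero hd hab
  refine Submodule.mem_prod.2 ⟨?_, Submodule.mem_span_singleton.2 ⟨eval 0 c, ?_⟩⟩
  · have ha : (evalZero ι K (-∑ j, g j • gradVec (F j), c • 1 + F * g)).1 =
        -∑ j, eval 0 (g j) • gradAt (F j) 0 := by
      ext t
      simp [evalZero, gradVec, gradAt]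
    rw [ha]
    exact neg_mem (sum_mem fun j _ => Submodule.smul_mem _ _ (Submodule.subset_span ⟨j, rfl⟩))
  · ext j
    simp [evalZero, constantCoeff_eq_zero_of_isHomogeneous (h.isHomogeneous j) (h.degree_ne_zero j)]

lemma IsNormalCrossing.card_add_two_le [IsAlgClosed K] (h : IsNormalCrossing F e)
    (hd : ((∑ j, e j : ℕ) : K) ≠ 0) {T : Finset (Fin 3 → MvPolynomial (Fin 3) K)}
    (hT : Submodule.span (MvPolynomial (Fin 3) K) (T : Set (Fin 3 → MvPolynomial (Fin 3) K)) =
      jacobianSyzygies (∏ j, F j)) :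
    Fintype.card ι + 2 ≤ T.card + linearRank F := by
  classical
  have hlower := finrank_le_card_add_finrank_map_ker (presentation F) (evalZero ι K)
    evalZero_surjective T (hT.trans (h.range_presentation hd).symm)
  rw [Module.finrank_prod, Module.finrank_fin_fun, Module.finrank_fintype_fun_eq_card] at hlower
  have hker := (Submodule.finrank_mono (h.map_evalZero_ker_le hd)).trans (finrank_prod_le _ _)
  have hone : Module.finrank K (Submodule.span K {(1 : ι → K)}) ≤ 1 :=
    (finrank_span_le_card _).trans (by simp)
  unfold linearRank
  omega

/-- The syzygies given by the 2-forms `df ∧ du`, for `u` a linear form. -/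
noncomputable def koszulSyzygy (f : MvPolynomial (Fin 3) K) :
    (Fin 3 → K) →ₗ[K] (Fin 3 → MvPolynomial (Fin 3) K) :=
  (crossProduct (gradVec f)).restrictScalars K ∘ₗ
    (Algebra.linearMap K (MvPolynomial (Fin 3) K)).compLeft (Fin 3)

lemma koszulSyzygy_apply (f : MvPolynomial (Fin 3) K) (u : Fin 3 → K) :
    koszulSyzygy f u = gradVec f ⨯₃ (C ∘ u) := rfl

lemma range_presentation_eq_sup [DecidableEq ι] (F : ι → MvPolynomial (Fin 3) K) :
    (presentation F).range = Submodule.span _ (Set.range (koszulSyzygy (∏ j, F j))) ⊔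
      Submodule.span _ (Set.range (rhoSyzygy F)) := by
  rw [presentation, LinearMap.range_coprod, Fintype.range_linearCombination]
  congr 1
  refine le_antisymm ?_ (Submodule.span_le.2 ?_)
  · rintro _ ⟨a, rfl⟩
    rw [pi_eq_sum_univ' a, map_sum]
    refine sum_mem fun t _ => ?_
    rw [map_smul]
    refine Submodule.smul_mem _ _ (Submodule.subset_span ⟨Pi.single t 1, ?_⟩)
    rw [koszulSyzygy_apply]
    congr 1
    ext1 s
    simp [Pi.single_apply, apply_ite C, eq_comm]
  · rintro _ ⟨u, rfl⟩
    exact ⟨_, rfl⟩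

lemma IsNormalCrossing.koszulSyzygy_gradAt_mem [DecidableEq ι] (h : IsNormalCrossing F e)
    (j : ι) : koszulSyzygy (∏ j, F j) (gradAt (F j) 0) ∈ Submodule.span (MvPolynomial (Fin 3) K)
      (Set.range (rhoSyzygy F)) := by
  by_cases hj : e j = 1
  · rw [koszulSyzygy_apply, ← gradVec_eq_C_comp_gradAt (hj ▸ h.isHomogeneous j),
      ← smul_rhoSyzygy]
    exact Submodule.smul_mem _ _ (Submodule.subset_span ⟨j, rfl⟩)
  · rw [gradAt_zero_eq_zero (h.isHomogeneous j) hj, map_zero]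
    exact zero_mem _

lemma IsNormalCrossing.exists_finset_span_eq_jacobianSyzygies [IsAlgClosed K]
    (h : IsNormalCrossing F e) (hd : ((∑ j, e j : ℕ) : K) ≠ 0) :
    ∃ T : Finset (Fin 3 → MvPolynomial (Fin 3) K), T.card + linearRank F ≤ Fintype.card ι + 2 ∧
      Submodule.span (MvPolynomial (Fin 3) K) (T : Set (Fin 3 → MvPolynomial (Fin 3) K)) =
        jacobianSyzygies (∏ j, F j) := by
  classical
  obtain ⟨i, -, -⟩ := Finset.exists_ne_zero_of_sum_ne_zero fun h0 => hd (by rw [h0, Nat.cast_zero])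
  obtain ⟨T₀, hcard, hT₀⟩ := exists_finset_card_add_finrank_eq
    (Submodule.span K (Set.range fun j => gradAt (F j) 0))
  refine ⟨T₀.image (koszulSyzygy (∏ j, F j)) ∪ (Finset.univ.erase i).image (rhoSyzygy F), ?_, ?_⟩
  · have hunion := Finset.card_union_le (T₀.image (koszulSyzygy (∏ j, F j)))
      ((Finset.univ.erase i).image (rhoSyzygy F))
    have hkoszul := Finset.card_image_le (s := T₀) (f := koszulSyzygy (∏ j, F j))
    have hrho := Finset.card_image_le (s := Finset.univ.erase i) (f := rhoSyzygy F)
    rw [Finset.card_erase_of_mem (Finset.mem_univ i), Finset.card_univ] at hrho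
    rw [Module.finrank_fin_fun] at hcard
    have := Fintype.card_pos_iff.2 ⟨i⟩
    unfold linearRank
    omega
  · rw [← h.range_presentation hd, range_presentation_eq_sup, Finset.coe_union, Finset.coe_image,
      Finset.coe_image, Submodule.span_union,
      span_image_erase_of_sum_eq_zero (sum_rhoSyzygy_eq_zero h.prod_ne_zero)]
    set N := Submodule.span (MvPolynomial (Fin 3) K) (koszulSyzygy (∏ j, F j) '' T₀) ⊔
      Submodule.span _ (Set.range (rhoSyzygy F))
    have htop : ⊤ ≤ (N.restrictScalars K).comap (koszulSyzygy (∏ j, F j)) := by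
      rw [← hT₀, sup_le_iff, Submodule.span_le, Submodule.span_le]
      refine ⟨fun u hu => Submodule.mem_sup_left (Submodule.subset_span ⟨u, hu, rfl⟩), ?_⟩
      rintro _ ⟨j, rfl⟩
      exact Submodule.mem_sup_right (h.koszulSyzygy_gradAt_mem j)
    refine le_antisymm (sup_le_sup_right (Submodule.span_mono (Set.image_subset_range _ _)) _)
      (sup_le (Submodule.span_le.2 ?_) le_sup_right)
    rintro _ ⟨u, rfl⟩
    exact htop trivial

end Bounds

section Lines

variable {ι K : Type*} [Field K]

lemma exists_ne_zero_forall_dotProduct_eq_zero {n : Type*} [Fintype n]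
    {W : Submodule K (n → K)} (hW : W ≠ ⊤) : ∃ p ≠ 0, ∀ u ∈ W, u ⬝ᵥ p = 0 := by
  classical
  obtain ⟨φ, hφ, hle⟩ := W.exists_le_ker_of_lt_top hW.lt_top
  refine ⟨(dotProductEquiv K n).symm φ, by simpa using hφ, fun u hu => ?_⟩
  rw [dotProduct_comm, ← dotProductEquiv_apply_apply, LinearEquiv.apply_symm_apply]
  exact hle hu

lemma gradAt_eq_gradAt {σ : Type*} {g : MvPolynomial σ K} (hg : g.IsHomogeneous 1)
    (p q : σ → K) : gradAt g p = gradAt g q :=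
  (C_injective σ K).comp_left
    ((gradVec_eq_C_comp_gradAt hg p).symm.trans (gradVec_eq_C_comp_gradAt hg q))

lemma eval_eq_gradAt_dotProduct {g : MvPolynomial (Fin 3) K} (hg : g.IsHomogeneous 1)
    (p q : Fin 3 → K) : eval p g = gradAt g q ⬝ᵥ p := by
  have h := congrArg (eval p) (dotProduct_gradVec_of_isHomogeneous hg)
  rw [gradVec_eq_C_comp_gradAt hg q, Nat.cast_one, one_smul, dotProduct, map_sum] at h
  simp [← h, dotProduct, mul_comm]

variable {F : ι → MvPolynomial (Fin 3) K} {e : ι → ℕ}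

lemma IsNormalCrossing.exists_common_zero (h : IsNormalCrossing F e) {s : Set ι}
    (hs : ∀ j ∈ s, e j = 1) (hspan : Submodule.span K ((fun j => gradAt (F j) 0) '' s) ≠ ⊤) :
    ∃ p ≠ 0, ∀ j ∈ s, eval p (F j) = 0 := by
  obtain ⟨p, hp, hpW⟩ := exists_ne_zero_forall_dotProduct_eq_zero hspan
  refine ⟨p, hp, fun j hj => ?_⟩
  rw [eval_eq_gradAt_dotProduct (hs j hj ▸ h.isHomogeneous j) p 0]
  exact hpW _ (Submodule.subset_span ⟨j, hj, rfl⟩)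

lemma IsNormalCrossing.linearIndepOn_pair (h : IsNormalCrossing F e) {i j : ι} (hij : i ≠ j)
    (hi : e i = 1) (hj : e j = 1) : LinearIndepOn K (fun j => gradAt (F j) 0) {i, j} := by
  have hspan : Submodule.span K ((fun j => gradAt (F j) 0) '' {i, j}) ≠ ⊤ := by
    classical
    intro htop
    have hcard := finrank_span_finset_le_card (R := K) {gradAt (F i) 0, gradAt (F j) 0}
    rw [Set.finrank, Finset.coe_pair, ← Set.image_pair (fun j => gradAt (F j) 0), htop,
      finrank_top, Module.finrank_fin_fun] at hcard
    exact absurd (hcard.trans Finset.card_le_two) (by decide)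
  obtain ⟨p, hp, hzero⟩ := h.exists_common_zero (by simp [hi, hj]) hspan
  have hind := h.transversal i j hij p hp (hzero i (by simp)) (hzero j (by simp))
  rw [gradAt_eq_gradAt (hi ▸ h.isHomogeneous i) p 0,
    gradAt_eq_gradAt (hj ▸ h.isHomogeneous j) p 0] at hind
  exact (LinearIndepOn.pair_iff _ hij).2 (LinearIndependent.pair_iff.1 hind)

lemma IsNormalCrossing.linearIndepOn_of_card_eq_three (h : IsNormalCrossing F e) {s : Finset ι}
    (hs : ∀ j ∈ s, e j = 1) (hcard : s.card = 3) :
    LinearIndepOn K (fun j => gradAt (F j) 0) (s : Set ι) := by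
  classical
  rw [LinearIndepOn, linearIndependent_iff_card_eq_finrank_span, Set.finrank,
    ← Set.image_eq_range (fun j => gradAt (F j) 0) (s : Set ι)]
  by_contra hrank
  obtain ⟨p, hp, hzero⟩ := h.exists_common_zero (s := s) hs fun htop => hrank (by
    rw [htop, finrank_top, Module.finrank_fin_fun, ← hcard]
    exact Fintype.card_coe s)
  obtain ⟨i, j, k, hij, hik, hjk, rfl⟩ := Finset.card_eq_three.1 hcard
  exact h.no_triple_point i j k hij hik hjk p hp
    ⟨hzero i (by simp), hzero j (by simp), hzero k (by simp)⟩

lemma IsNormalCrossing.linearIndepOn_of_card_le_three (h : IsNormalCrossing F e) {s : Finset ι}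
    (hs : ∀ j ∈ s, e j = 1) (hcard : s.card ≤ 3) :
    LinearIndepOn K (fun j => gradAt (F j) 0) (s : Set ι) := by
  classical
  interval_cases hc : s.card
  · rw [Finset.card_eq_zero.1 hc, Finset.coe_empty]
    exact linearIndepOn_empty _ _
  · obtain ⟨j, rfl⟩ := Finset.card_eq_one.1 hc
    have hj := hs j (Finset.mem_singleton_self j)
    rw [Finset.coe_singleton]
    refine LinearIndepOn.singleton fun h0 => one_ne_zero (h.smooth j 1 ?_)
    rw [gradAt_eq_gradAt (hj ▸ h.isHomogeneous j) 1 0, h0]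
  · obtain ⟨i, j, hij, rfl⟩ := Finset.card_eq_two.1 hc
    rw [Finset.coe_pair]
    exact h.linearIndepOn_pair hij (hs i (by simp)) (hs j (by simp))
  · exact h.linearIndepOn_of_card_eq_three hs hc

theorem IsNormalCrossing.linearRank_eq [Fintype ι] (h : IsNormalCrossing F e) :
    linearRank F = min (Finset.univ.filter fun j => e j = 1).card 3 := by
  classical
  set L := Finset.univ.filter fun j => e j = 1 with hL
  refine le_antisymm (le_min ?_ ?_) ?_
  · have hspan : Submodule.span K (Set.range fun j => gradAt (F j) 0) ≤
        Submodule.span K (L.image fun j => gradAt (F j) 0) := by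
      rw [Submodule.span_le]
      rintro _ ⟨j, rfl⟩
      by_cases hj : e j = 1
      · exact Submodule.subset_span (Finset.mem_image_of_mem _ (by simp [hL, hj]))
      · dsimp only
        rw [gradAt_zero_eq_zero (h.isHomogeneous j) hj]
        exact zero_mem _
    exact (Submodule.finrank_mono hspan).trans
      ((finrank_span_finset_le_card _).trans Finset.card_image_le)
  · exact (Submodule.finrank_le _).trans_eq (Module.finrank_fin_fun K)
  · obtain ⟨s, hsL, hs⟩ := Finset.exists_subset_card_eq (min_le_left L.card 3)
    have hind := h.linearIndepOn_of_card_le_three (s := s)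
      (fun j hj => (Finset.mem_filter.1 (hsL hj)).2) (hs ▸ min_le_right _ _)
    have hfin := (finrank_span_eq_card hind).trans (Fintype.card_coe s)
    rw [← Set.image_eq_range (fun j => gradAt (F j) 0) (s : Set ι), hs] at hfin
    exact hfin.ge.trans (Submodule.finrank_mono (Submodule.span_mono (Set.image_subset_range _ _)))

end Lines

lemma D0_eq_jacobianSyzygies (f : S) : D0 f = jacobianSyzygies f := rfl

end NormalCrossing

open NormalCrossing in
theorem numGenerators_of_ell_le_two_general {ι K : Type*} [Fintype ι] [Field K] [IsAlgClosed K]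
    {F : ι → MvPolynomial (Fin 3) K} {e : ι → ℕ} (h : IsNormalCrossing F e)
    (hd : ((∑ j, e j : ℕ) : K) ≠ 0) :
    IsLeast {n : ℕ | ∃ T : Finset (Fin 3 → MvPolynomial (Fin 3) K), T.card = n ∧
        Submodule.span (MvPolynomial (Fin 3) K) (T : Set (Fin 3 → MvPolynomial (Fin 3) K)) =
          jacobianSyzygies (∏ i, F i)}
      (Fintype.card ι + 2 - min (Finset.univ.filter fun j => e j = 1).card 3) := by
  classical
  rw [← h.linearRank_eq]
  constructor
  · obtain ⟨T, hcard, hT⟩ := h.exists_finset_span_eq_jacobianSyzygies hd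
    exact ⟨T, le_antisymm (by omega) (by have := h.card_add_two_le hd hT; omega), hT⟩
  · rintro _ ⟨T, rfl, hT⟩
    exact Nat.sub_le_of_le_add (h.card_add_two_le hd hT)

/-- if `ℓ(C) ≤ 2` then the minimal number of generators of the `S`-module
`D₀(f)` is exactly `m + 2 − ℓ(C)`: `C` is an `s`-syzygy curve with `s = m + 2 − ℓ(C)`. -/
theorem numGenerators_of_ell_le_two
    (m : ℕ) (hm : 4 ≤ m) (F : Fin m → S) (e : Fin m → ℕ)
    (he : ∀ j, 1 ≤ e j)
    (hhom : ∀ j, (F j).IsHomogeneous (e j))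
    (hsmooth : ∀ j, ∀ p : Fin 3 → ℂ,
      (∀ t, eval p (pderiv t (F j)) = 0) → p = 0)
    (hnc : ∀ i j : Fin m, i ≠ j → ∀ p : Fin 3 → ℂ, p ≠ 0 →
      eval p (F i) = 0 → eval p (F j) = 0 →
      LinearIndependent ℂ
        ![fun t => eval p (pderiv t (F i)), fun t => eval p (pderiv t (F j))])
    (htriple : ∀ i j k : Fin m, i ≠ j → i ≠ k → j ≠ k → ∀ p : Fin 3 → ℂ, p ≠ 0 →
      ¬(eval p (F i) = 0 ∧ eval p (F j) = 0 ∧ eval p (F k) = 0))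
    (hl : (Finset.univ.filter (fun j => e j = 1)).card ≤ 2) :
    IsLeast {n : ℕ | ∃ T : Finset (Fin 3 → S),
        T.card = n ∧ Submodule.span S (T : Set (Fin 3 → S)) = D0 (∏ i, F i)}
      (m + 2 - (Finset.univ.filter (fun j => e j = 1)).card) := by
  have h : NormalCrossing.IsNormalCrossing F e :=
    ⟨hhom, fun j p hp => hsmooth j p (congrFun hp), hnc, htriple⟩
  have hd : ((∑ j, e j : ℕ) : ℂ) ≠ 0 :=
    Nat.cast_ne_zero.2 (Finset.sum_pos (fun j _ => he j) ⟨⟨0, by omega⟩, Finset.mem_univ _⟩).ne'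
  simpa only [min_eq_left (hl.trans (Nat.le_succ 2)), Fintype.card_fin,
    ← NormalCrossing.D0_eq_jacobianSyzygies] using numGenerators_of_ell_le_two_general h hd
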